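/- arXiv:0804.3500 — 2 statements merged into one kernel-verified Lean document; each statement's English description precedes it below -/
import Mathlib

section
/- Representation Theorem: Let (M, φ) be a size pair with reduced size function ℓ*. For every (x̄, ȳ) ∈ Δ⁺, ℓ*(x̄, ȳ) equals the sum of the multiplicities μ(x,y) over all points (x,y) ∈ Δ* (proper points and points at infinity) with x ≤ x̄ and y > ȳ. -/
open Set Topology
open scoped ENNReal

noncomputable def rsf {M : Type*} [TopologicalSpace M] (φ : M → ℝ) (x y : ℝ) : ℕ :=
  Set.ncard {C : Set M | ∃ P, φ P ≤ x ∧ C = connectedComponentIn {Q | φ Q ≤ y} P}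

noncomputable def mult {M : Type*} [TopologicalSpace M] (φ : M → ℝ) (p : ℝ × ℝ) : ℤ :=
  sInf {z : ℤ | ∃ ε : ℝ, 0 < ε ∧ p.1 + ε < p.2 - ε ∧
    z = (rsf φ (p.1 + ε) (p.2 - ε) : ℤ) - (rsf φ (p.1 - ε) (p.2 - ε) : ℤ)
      - (rsf φ (p.1 + ε) (p.2 + ε) : ℤ) + (rsf φ (p.1 - ε) (p.2 + ε) : ℤ)}

noncomputable def multInf {M : Type*} [TopologicalSpace M] (φ : M → ℝ) (k : ℝ) : ℤ :=
  sInf {z : ℤ | ∃ ε : ℝ, 0 < ε ∧ k + ε < 1 / ε ∧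
    z = (rsf φ (k + ε) (1 / ε) : ℤ) - (rsf φ (k - ε) (1 / ε) : ℤ)}

open scoped Classical in
noncomputable def eDist (p q : ℝ × EReal) : ℝ≥0∞ :=
  if p.2 = ⊤ ∧ q.2 = ⊤ then ENNReal.ofReal |p.1 - q.1|
  else if p.2 = ⊤ ∨ q.2 = ⊤ then ⊤
  else ENNReal.ofReal (min (max |p.1 - q.1| |p.2.toReal - q.2.toReal|)
    (max ((p.2.toReal - p.1) / 2) ((q.2.toReal - q.1) / 2)))

def IsRepSeq {M : Type*} [TopologicalSpace M] (φ : M → ℝ) (a : ℕ → ℝ × EReal) : Prop :=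
  (∃ k : ℝ, a 0 = (k, ⊤) ∧ 0 < multInf φ k) ∧
  (∀ i : ℕ, 0 < i →
    (∃ x y : ℝ, a i = (x, (y : EReal)) ∧ x < y ∧ 0 < mult φ (x, y)) ∨
    (∃ x : ℝ, a i = (x, (x : EReal)))) ∧
  (∀ x y : ℝ, x < y → 0 < mult φ (x, y) →
    Set.ncard {i : ℕ | a i = (x, (y : EReal))} = (mult φ (x, y)).toNat) ∧
  {i : ℕ | ∃ x : ℝ, a i = (x, (x : EReal))}.Infinite

noncomputable def dMatchSeq (a b : ℕ → ℝ × EReal) : ℝ≥0∞ :=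
  ⨅ σ : {σ : ℕ → ℕ // Function.Bijective σ}, ⨆ i : ℕ, eDist (a i) (b (σ.1 i))

noncomputable def dMatch {M N : Type*} [TopologicalSpace M] [TopologicalSpace N]
    (φ : M → ℝ) (ψ : N → ℝ) : ℝ≥0∞ :=
  sInf {s : ℝ≥0∞ | ∃ a b, IsRepSeq φ a ∧ IsRepSeq ψ b ∧ s = dMatchSeq a b}


def compSet {M : Type*} [TopologicalSpace M] (φ : M → ℝ) (x y : ℝ) : Set (Set M) :=
  {C : Set M | ∃ P, φ P ≤ x ∧ C = connectedComponentIn {Q | φ Q ≤ y} P}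

section topo
variable {M : Type*} [TopologicalSpace M]

lemma rsf_eq (φ : M → ℝ) (x y : ℝ) : rsf φ x y = (compSet φ x y).ncard := rfl

lemma isClosed_ccIn {F : Set M} (hF : IsClosed F) (P : M) :
    IsClosed (connectedComponentIn F P) := by
  by_cases hP : P ∈ F
  · apply isClosed_of_closure_subset
    exact (isPreconnected_connectedComponentIn.closure).subset_connectedComponentIn
      (subset_closure (mem_connectedComponentIn hP))
      (closure_minimal (connectedComponentIn_subset F P) hF)
  · rw [connectedComponentIn_eq_empty hP]; exact isClosed_empty

lemma isPreconnected_iInter_dir [CompactSpace M] [T2Space M] {ι : Type*} [Nonempty ι]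
    {V : ι → Set M} (hd : Directed (· ⊇ ·) V) (hc : ∀ i, IsClosed (V i))
    (hp : ∀ i, IsPreconnected (V i)) : IsPreconnected (⋂ i, V i) := by
  rw [isPreconnected_iff_subset_of_fully_disjoint_closed (isClosed_iInter hc)]
  intro u v hu hv huv hdis
  obtain ⟨U, W, hU, hW, huU, hvW, hUW⟩ := normal_separation hu hv hdis
  obtain ⟨i, hi⟩ := exists_subset_nhds_of_isCompact hd (fun i => (hc i).isCompact)
    (U := U ∪ W) (fun x hx => (hU.union hW).mem_nhds
      (union_subset_union huU hvW (huv hx)))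
  have hI : (⋂ i, V i) ⊆ V i := iInter_subset _ i
  rcases (hp i).subset_or_subset hU hW hUW hi with h | h
  · left
    intro x hx
    rcases huv hx with h1 | h1
    · exact h1
    · exact (Set.disjoint_left.1 hUW (h (hI hx)) (hvW h1)).elim
  · right
    intro x hx
    rcases huv hx with h1 | h1
    · exact (Set.disjoint_left.1 hUW (huU h1) (h (hI hx))).elim
    · exact h1

lemma sub_mono (φ : M → ℝ) {y y' : ℝ} (h : y ≤ y') : {Q | φ Q ≤ y} ⊆ {Q | φ Q ≤ y'} :=
  fun _ hQ => le_trans hQ h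

lemma compSet_mono (φ : M → ℝ) {x x' : ℝ} (y : ℝ) (h : x ≤ x') :
    compSet φ x y ⊆ compSet φ x' y := by
  rintro C ⟨P, hP, rfl⟩
  exact ⟨P, hP.trans h, rfl⟩

lemma isClosed_sub {φ : M → ℝ} (hφ : Continuous φ) (y : ℝ) : IsClosed {Q | φ Q ≤ y} :=
  isClosed_le hφ continuous_const

lemma compSet_finite [CompactSpace M] [LocallyConnectedSpace M] {φ : M → ℝ} (hφ : Continuous φ)
    {x y : ℝ} (hxy : x < y) : (compSet φ x y).Finite := by
  have hU : IsOpen {Q | φ Q < y} := isOpen_lt hφ continuous_const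
  have hK : IsCompact {Q | φ Q ≤ x} := (isClosed_sub hφ x).isCompact
  obtain ⟨t, ht, hcov⟩ := hK.elim_nhds_subcover (fun P => connectedComponentIn {Q | φ Q < y} P)
    (fun P hP => connectedComponentIn_mem_nhds (hU.mem_nhds (lt_of_le_of_lt hP hxy)))
  refine (t.finite_toSet.image (fun P => connectedComponentIn {Q | φ Q ≤ y} P)).subset ?_
  rintro C ⟨P, hP, rfl⟩
  have h1 := hcov hP
  simp only [mem_iUnion] at h1
  obtain ⟨R, hR, hPR⟩ := h1
  refine ⟨R, hR, ?_⟩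
  exact connectedComponentIn_eq (connectedComponentIn_mono R
    (show {Q | φ Q < y} ⊆ {Q | φ Q ≤ y} from fun Q (hQ : φ Q < y) => (le_of_lt hQ : φ Q ≤ y)) hPR)

lemma rsf_mono [CompactSpace M] [LocallyConnectedSpace M] {φ : M → ℝ} (hφ : Continuous φ)
    {x x' y : ℝ} (h : x ≤ x') (hxy : x' < y) : rsf φ x y ≤ rsf φ x' y :=
  Set.ncard_le_ncard (compSet_mono φ y h) (compSet_finite hφ hxy)

lemma rsf_box [CompactSpace M] [LocallyConnectedSpace M] {φ : M → ℝ} (hφ : Continuous φ)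
    {x1 x2 y1 y2 : ℝ} (hx : x1 ≤ x2) (hxy : x2 < y1) (hy : y1 ≤ y2) :
    rsf φ x2 y2 + rsf φ x1 y1 ≤ rsf φ x2 y1 + rsf φ x1 y2 := by
  have e1 := Set.ncard_sdiff_add_ncard_of_subset (compSet_mono φ y1 hx) (compSet_finite hφ hxy)
  have e2 := Set.ncard_sdiff_add_ncard_of_subset (compSet_mono φ y2 hx)
    (compSet_finite hφ (hxy.trans_le hy))
  have hfin : (compSet φ x2 y1 \ compSet φ x1 y1).Finite := (compSet_finite hφ hxy).sdiff
  have key : (compSet φ x2 y2 \ compSet φ x1 y2) ⊆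
      (fun C : Set M => ⋃ P ∈ C, connectedComponentIn {Q | φ Q ≤ y2} P) ''
        (compSet φ x2 y1 \ compSet φ x1 y1) := by
    rintro C ⟨⟨P, hP, rfl⟩, hC⟩
    have hPy : φ P ≤ y1 := hP.trans hxy.le
    have hsub : ∀ R ∈ connectedComponentIn {Q | φ Q ≤ y1} P,
        connectedComponentIn {Q | φ Q ≤ y2} P = connectedComponentIn {Q | φ Q ≤ y2} R :=
      fun R hR => connectedComponentIn_eq (connectedComponentIn_mono P (sub_mono φ hy) hR)
    refine ⟨connectedComponentIn {Q | φ Q ≤ y1} P, ⟨⟨P, hP, rfl⟩, ?_⟩, ?_⟩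
    · rintro ⟨R, hR, hRe⟩
      refine hC ⟨R, hR, hsub R ?_⟩
      rw [hRe]
      exact mem_connectedComponentIn ((hR.trans hx).trans hxy.le)
    · ext Z
      simp only [mem_iUnion]
      constructor
      · rintro ⟨R, hR, hZ⟩
        rwa [hsub R hR]
      · intro hZ
        exact ⟨P, mem_connectedComponentIn hPy, hZ⟩
  have h3 := (Set.ncard_le_ncard key (hfin.image _)).trans (Set.ncard_image_le hfin)
  simp only [rsf_eq]
  omega

lemma rsf_eq_zero {φ : M → ℝ} {x y : ℝ} (h : ∀ P, x < φ P) : rsf φ x y = 0 := by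
  have : compSet φ x y = ∅ := by
    ext C
    simp only [compSet, mem_ofPred_eq, mem_empty_iff_false, iff_false]
    rintro ⟨P, hP, -⟩
    exact absurd hP (not_le.2 (h P))
  rw [rsf_eq, this, Set.ncard_empty]

lemma rsf_eq_one [ConnectedSpace M] {φ : M → ℝ} {x y : ℝ} (h : ∀ P, φ P ≤ y) {P : M}
    (hP : φ P ≤ x) : rsf φ x y = 1 := by
  have hu : {Q | φ Q ≤ y} = univ := eq_univ_of_forall h
  have : compSet φ x y = {univ} := by
    ext C
    simp only [compSet, hu, connectedComponentIn_univ, PreconnectedSpace.connectedComponent_eq_univ,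
      mem_ofPred_eq, mem_singleton_iff]
    exact ⟨fun ⟨_, _, h⟩ => h, fun h => ⟨P, hP, h⟩⟩
  rw [rsf_eq, this, Set.ncard_singleton]

lemma rsf_right_x [CompactSpace M] [LocallyConnectedSpace M] {φ : M → ℝ} (hφ : Continuous φ)
    {x y : ℝ} (hxy : x < y) : ∀ᶠ x' in 𝓝[>] x, rsf φ x' y = rsf φ x y := by
  obtain ⟨z, hxz, hzy⟩ := exists_between hxy
  have hfin := compSet_finite hφ hzy
  have h1 : ∀ᶠ x' in 𝓝[>] x, ∀ C ∈ compSet φ z y, (∃ P ∈ C, φ P ≤ x') → C ∈ compSet φ x y := by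
    rw [Filter.eventually_all_finite hfin]
    rintro C ⟨P, hP, rfl⟩
    have hcl := isClosed_ccIn (isClosed_sub hφ y) P
    obtain ⟨R, hR, hmin⟩ := hcl.isCompact.exists_isMinOn
      ⟨P, mem_connectedComponentIn (hP.trans hzy.le)⟩ hφ.continuousOn
    by_cases hRx : φ R ≤ x
    · exact Filter.Eventually.of_forall fun x' _ => ⟨R, hRx, connectedComponentIn_eq hR⟩
    · filter_upwards [Ioo_mem_nhdsGT (not_le.1 hRx)] with x' hx'
      rintro ⟨Q, hQ, hQx⟩
      have := hmin hQ
      simp only [mem_ofPred_eq] at this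
      linarith [hx'.2]
  filter_upwards [h1, Ioo_mem_nhdsGT hxz] with x' hx' hx'z
  rw [rsf_eq, rsf_eq]
  congr 1
  apply Subset.antisymm
  · rintro C ⟨P, hP, rfl⟩
    exact hx' _ ⟨P, hP.trans hx'z.2.le, rfl⟩
      ⟨P, mem_connectedComponentIn (hP.trans (hx'z.2.trans hzy).le), hP⟩
  · exact compSet_mono φ y hx'z.1.le

lemma cc_ne_eventually [CompactSpace M] [T2Space M] {φ : M → ℝ} (hφ : Continuous φ)
    {y : ℝ} {P Q : M} (hP : φ P ≤ y) (hQ : φ Q ≤ y)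
    (hne : connectedComponentIn {Q | φ Q ≤ y} P ≠ connectedComponentIn {Q | φ Q ≤ y} Q) :
    ∀ᶠ y' in 𝓝[>] y,
      connectedComponentIn {Q | φ Q ≤ y'} P ≠ connectedComponentIn {Q | φ Q ≤ y'} Q := by
  by_contra hcon
  have hall : ∀ z : Ioi y, Q ∈ connectedComponentIn {Q | φ Q ≤ z.1} P := by
    rintro ⟨z, hz⟩
    by_contra hz'
    apply hcon
    filter_upwards [Ioo_mem_nhdsGT hz] with y' hy' he
    apply hz'
    apply connectedComponentIn_mono P (sub_mono φ hy'.2.le)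
    rw [he]
    exact mem_connectedComponentIn (hQ.trans hy'.1.le)
  have : Nonempty (Ioi y) := ⟨⟨y + 1, by simp⟩⟩
  have hdir : Directed (· ⊇ ·) (fun z : Ioi y => connectedComponentIn {Q | φ Q ≤ z.1} P) := by
    intro a b
    refine ⟨min a b, ?_, ?_⟩
    · exact connectedComponentIn_mono P (sub_mono φ (by exact_mod_cast min_le_left a b))
    · exact connectedComponentIn_mono P (sub_mono φ (by exact_mod_cast min_le_right a b))
  have hpre := isPreconnected_iInter_dir hdir (fun z => isClosed_ccIn (isClosed_sub hφ z.1) P)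
    (fun z => isPreconnected_connectedComponentIn)
  apply hne
  apply connectedComponentIn_eq
  refine hpre.subset_connectedComponentIn
    (mem_iInter.2 fun z => mem_connectedComponentIn (hP.trans (le_of_lt z.2))) ?_
    (mem_iInter.2 hall)
  intro R hR
  rw [mem_iInter] at hR
  show φ R ≤ y
  refine le_of_forall_gt_imp_ge_of_dense fun z hz => ?_
  have hmem : R ∈ {Q | φ Q ≤ z} := connectedComponentIn_subset _ _ (hR ⟨z, hz⟩)
  exact hmem

lemma rsf_anti [CompactSpace M] [Nonempty M] [LocallyConnectedSpace M] {φ : M → ℝ}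
    (hφ : Continuous φ) {x y y' : ℝ} (hxy : x < y) (h : y ≤ y') : rsf φ x y' ≤ rsf φ x y := by
  obtain ⟨R, -, hR⟩ := isCompact_univ.exists_isMinOn univ_nonempty hφ.continuousOn
  have hR' : ∀ P, min x (φ R - 1) < φ P := fun P =>
    lt_of_le_of_lt (min_le_right _ _) (by have := hR (mem_univ P); simp at this; linarith)
  have := rsf_box hφ (min_le_left x (φ R - 1)) hxy h
  rw [rsf_eq_zero hR', rsf_eq_zero hR'] at this
  simpa using this

lemma rsf_right_y [CompactSpace M] [Nonempty M] [T2Space M] [LocallyConnectedSpace M] {φ : M → ℝ}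
    (hφ : Continuous φ) {x y : ℝ} (hxy : x < y) : ∀ᶠ y' in 𝓝[>] y, rsf φ x y' = rsf φ x y := by
  have hfin := compSet_finite hφ hxy
  have hr : ∀ C ∈ compSet φ x y, ∃ P, φ P ≤ x ∧ C = connectedComponentIn {Q | φ Q ≤ y} P :=
    fun C hC => hC
  choose! r hr1 hr2 using hr
  have h1 : ∀ᶠ y' in 𝓝[>] y, ∀ C ∈ compSet φ x y, ∀ C' ∈ compSet φ x y, C ≠ C' →
      connectedComponentIn {Q | φ Q ≤ y'} (r C) ≠ connectedComponentIn {Q | φ Q ≤ y'} (r C') := by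
    rw [Filter.eventually_all_finite hfin]
    intro C hC
    rw [Filter.eventually_all_finite hfin]
    intro C' hC'
    by_cases hCC : C = C'
    · exact Filter.Eventually.of_forall fun y' h => absurd hCC h
    · have := cc_ne_eventually hφ ((hr1 C hC).trans hxy.le) ((hr1 C' hC').trans hxy.le)
        (by rw [← hr2 C hC, ← hr2 C' hC']; exact hCC)
      filter_upwards [this] with y' hy' _ using hy'
  filter_upwards [h1, self_mem_nhdsWithin] with y' hy' hyy'
  have hyy' : y < y' := hyy'
  apply le_antisymm (rsf_anti hφ hxy hyy'.le)
  rw [rsf_eq, rsf_eq]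
  apply Set.ncard_le_ncard_of_injOn (fun C => connectedComponentIn {Q | φ Q ≤ y'} (r C))
    (ht := compSet_finite hφ (hxy.trans hyy'))
  · intro C hC
    exact ⟨r C, hr1 C hC, rfl⟩
  · intro C hC C' hC' h
    by_contra hne
    exact hy' C hC C' hC' hne h

end topo

section comb
open Filter

lemma ev_add {p : ℝ → Prop} {u : ℝ} (h : ∀ᶠ v in 𝓝[>] u, p v) :
    ∀ᶠ ε in 𝓝[>] (0 : ℝ), p (u + ε) := by
  obtain ⟨z, hz, hsub⟩ := mem_nhdsGT_iff_exists_Ioo_subset.1 h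
  have hz : u < z := hz
  filter_upwards [Ioo_mem_nhdsGT (sub_pos.2 hz)] with ε hε
  exact hsub ⟨by linarith [hε.1], by linarith [hε.2]⟩

lemma ev_lt {c : ℝ} (hc : 0 < c) : ∀ᶠ ε in 𝓝[>] (0 : ℝ), ε < c := by
  filter_upwards [Ioo_mem_nhdsGT hc] with ε hε using hε.2

lemma ev_pos : ∀ᶠ ε in 𝓝[>] (0 : ℝ), 0 < ε := self_mem_nhdsWithin

lemma step_set (g : ℝ → ℤ) (a b : ℝ) (hab : a ≤ b)
    (hm : ∀ u v, a ≤ u → u ≤ v → v ≤ b → g u ≤ g v)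
    (hr : ∀ u, a ≤ u → u < b → ∀ᶠ v in 𝓝[>] u, g v = g u) :
    ∃ S : Finset ℝ, (∀ s ∈ S, a < s ∧ s ≤ b) ∧
      ∀ u v, a ≤ u → u ≤ v → v ≤ b → (∀ s ∈ S, ¬ (u < s ∧ s ≤ v)) → g u = g v := by
  classical
  let A : ℤ → Set ℝ := fun w => {t | a ≤ t ∧ t ≤ b ∧ w ≤ g t}
  have hbdd : ∀ w, BddBelow (A w) := fun w => ⟨a, fun t ht => ht.1⟩
  have hmem : ∀ w, w ≤ g b → sInf (A w) ∈ A w := by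
    intro w hw
    have hne : (A w).Nonempty := ⟨b, hab, le_rfl, hw⟩
    have h1 : a ≤ sInf (A w) := le_csInf hne fun t ht => ht.1
    have h2 : sInf (A w) ≤ b := csInf_le (hbdd w) ⟨hab, le_rfl, hw⟩
    refine ⟨h1, h2, ?_⟩
    by_contra hlt
    push Not at hlt
    have h3 : sInf (A w) < b := by
      rcases h2.lt_or_eq with h | h
      · exact h
      · rw [h] at hlt; exact absurd hw (not_le.2 hlt)
    obtain ⟨z, hz, hsub⟩ := mem_nhdsGT_iff_exists_Ioo_subset.1 (hr _ h1 h3)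
    obtain ⟨t, ht, htz⟩ := exists_lt_of_csInf_lt hne hz
    have h4 : sInf (A w) ≤ t := csInf_le (hbdd w) ht
    rcases h4.lt_or_eq with h | h
    · have h5 : g t = g (sInf (A w)) := hsub ⟨h, htz⟩
      have := ht.2.2
      omega
    · have := ht.2.2
      rw [← h] at this
      omega
  refine ⟨(Finset.Ioc (g a) (g b)).image (fun w => sInf (A w)), ?_, ?_⟩
  · intro s hs
    obtain ⟨w, hw, rfl⟩ := Finset.mem_image.1 hs
    rw [Finset.mem_Ioc] at hw
    have h := hmem w hw.2
    refine ⟨lt_of_le_of_ne h.1 ?_, h.2.1⟩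
    intro he
    have := h.2.2
    rw [← he] at this
    omega
  · intro u v hu huv hv hS
    by_contra hne
    have hlt : g u < g v := lt_of_le_of_ne (hm u v hu huv hv) hne
    have hau := hm a u le_rfl hu (huv.trans hv)
    have hvb := hm v b (hu.trans huv) hv le_rfl
    refine hS (sInf (A (g v))) (Finset.mem_image.2 ⟨g v, ?_, rfl⟩) ⟨?_, ?_⟩
    · rw [Finset.mem_Ioc]; omega
    · by_contra hle
      push Not at hle
      have h := hmem (g v) hvb
      have h2 := hm _ u h.1 hle (huv.trans hv)
      have := h.2.2
      omega
    · exact csInf_le (hbdd _) ⟨hu.trans huv, hv, le_rfl⟩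

lemma step_sum (a : ℝ) (S : Finset ℝ) : ∀ b : ℝ, a ≤ b → (∀ s ∈ S, a < s ∧ s ≤ b) →
    ∀ᶠ ε in 𝓝[>] (0 : ℝ), (∀ s ∈ S, a ≤ s - ε) ∧ ∀ h : ℝ → ℤ,
      (∀ u v, a ≤ u → u ≤ v → v ≤ b → (∀ s ∈ S, ¬ (u < s ∧ s ≤ v)) → h u = h v) →
      h b - h a = ∑ s ∈ S, (h s - h (s - ε)) := by
  classical
  induction S using Finset.induction_on_max with
  | empty =>
    intro b hab _
    refine Eventually.of_forall fun ε => ⟨by simp, fun h hh => ?_⟩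
    rw [hh a b le_rfl hab le_rfl (by simp)]
    simp
  | insert m S hlt ih =>
    intro b hab hS
    have hm := hS m (Finset.mem_insert_self m S)
    obtain ⟨c, hac, hcm, hSc⟩ : ∃ c, a ≤ c ∧ c < m ∧ ∀ s ∈ S, s ≤ c := by
      rcases S.eq_empty_or_nonempty with rfl | hne
      · exact ⟨a, le_rfl, hm.1, by simp⟩
      · refine ⟨S.max' hne, ?_, hlt _ (S.max'_mem hne), fun s hs => S.le_max' s hs⟩
        exact (hS _ (Finset.mem_insert_of_mem (S.max'_mem hne))).1.le
    have hmS : m ∉ S := fun h => lt_irrefl _ (hlt m h)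
    filter_upwards [ih c hac (fun s hs => ⟨(hS s (Finset.mem_insert_of_mem hs)).1, hSc s hs⟩),
      ev_lt (sub_pos.2 hcm), ev_pos] with ε hε hεc hε0
    refine ⟨?_, ?_⟩
    · intro s hs
      rcases Finset.mem_insert.1 hs with rfl | hs
      · linarith
      · exact hε.1 s hs
    · intro h hh
      rw [Finset.sum_insert hmS, ← hε.2 h]
      · have e1 : h m = h b := by
          apply hh m b hm.1.le hm.2 le_rfl
          intro s hs hs'
          rcases Finset.mem_insert.1 hs with rfl | hs
          · exact lt_irrefl _ hs'.1
          · exact lt_asymm (hlt s hs) hs'.1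
        have e2 : h c = h (m - ε) := by
          apply hh c (m - ε) hac (by linarith) (by linarith [hm.2])
          intro s hs hs'
          rcases Finset.mem_insert.1 hs with rfl | hs
          · linarith [hs'.2]
          · linarith [hs'.1, hSc s hs]
        rw [e1, e2]; ring
      · intro u v hu huv hv hno
        apply hh u v hu huv (by linarith [hm.2])
        intro s hs hs'
        rcases Finset.mem_insert.1 hs with rfl | hs
        · linarith [hs'.2]
        · exact hno s hs hs'

lemma ev_gap (S : Finset ℝ) {s : ℝ} (hs : s ∉ S) :
    ∀ᶠ ε in 𝓝[>] (0 : ℝ), ∀ s' ∈ S, ¬ (s - ε < s' ∧ s' ≤ s) := by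
  rw [Filter.eventually_all_finset]
  intro s' hs'
  rcases lt_trichotomy s' s with h | h | h
  · filter_upwards [ev_lt (sub_pos.2 h)] with ε hε h'
    linarith [h'.1]
  · exact absurd (h ▸ hs') hs
  · exact Eventually.of_forall fun ε h' => absurd h'.2 (not_le.2 h)

noncomputable def bx {M : Type*} [TopologicalSpace M] (φ : M → ℝ) (x1 x2 y1 y2 : ℝ) : ℤ :=
  (rsf φ x2 y1 : ℤ) - (rsf φ x1 y1 : ℤ) - (rsf φ x2 y2 : ℤ) + (rsf φ x1 y2 : ℤ)

section
variable {M : Type*} [TopologicalSpace M] [CompactSpace M] [ConnectedSpace M]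
  [LocallyConnectedSpace M] [T2Space M] {φ : M → ℝ}

lemma bx_nonneg (hφ : Continuous φ) {x1 x2 y1 y2 : ℝ} (hx : x1 ≤ x2) (hxy : x2 < y1)
    (hy : y1 ≤ y2) : 0 ≤ bx φ x1 x2 y1 y2 := by
  have := rsf_box hφ hx hxy hy
  unfold bx
  omega

lemma bx_sub (hφ : Continuous φ) {x1 x1' x2' x2 y1 y1' y2' y2 : ℝ} (h1 : x1 ≤ x1')
    (h2 : x1' ≤ x2') (h3 : x2' ≤ x2) (h : x2 < y1) (h4 : y1 ≤ y1') (h5 : y1' ≤ y2')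
    (h6 : y2' ≤ y2) : bx φ x1' x2' y1' y2' ≤ bx φ x1 x2 y1 y2 := by
  have a1 := bx_nonneg hφ (y2 := y2) h1 (lt_of_le_of_lt (h2.trans h3) h) (h4.trans (h5.trans h6))
  have a2 := bx_nonneg hφ h3 h (h4.trans (h5.trans h6))
  have a3 := bx_nonneg hφ h2 (lt_of_le_of_lt h3 h) h4
  have a4 := bx_nonneg hφ h2 (lt_of_le_of_lt h3 (h.trans_le (h4.trans h5))) h6
  unfold bx at *
  linarith

lemma mult_ev (hφ : Continuous φ) {s t : ℝ} (hst : s < t) :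
    ∀ᶠ ε in 𝓝[>] (0 : ℝ), mult φ (s, t) = bx φ (s - ε) s (t - ε) t := by
  set Z : Set ℤ := {z : ℤ | ∃ ε : ℝ, 0 < ε ∧ s + ε < t - ε ∧
    z = bx φ (s - ε) (s + ε) (t - ε) (t + ε)} with hZ
  have hmZ : mult φ (s, t) = sInf Z := rfl
  have hne : Z.Nonempty := ⟨_, (t - s) / 4, by linarith, by linarith, rfl⟩
  have hbd : BddBelow Z := by
    refine ⟨0, ?_⟩
    rintro z ⟨ε, h0, h1, rfl⟩
    exact bx_nonneg hφ (by linarith) h1 (by linarith)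
  obtain ⟨ε1, h10, h11, h12⟩ := Int.csInf_mem hne hbd
  have hmid : s < (s + t) / 2 := by linarith
  filter_upwards [ev_lt h10, ev_pos, ev_add (rsf_right_x hφ hmid), ev_add (rsf_right_y hφ hst),
    ev_lt (show 0 < (t - s) / 2 by linarith)] with ε hε1 hε0 hx hy hεt
  have e1 : mult φ (s, t) = bx φ (s - ε) (s + ε) (t - ε) (t + ε) := by
    rw [hmZ]
    apply le_antisymm
    · exact csInf_le hbd ⟨ε, hε0, by linarith, rfl⟩
    · rw [h12]
      exact bx_sub hφ (by linarith) (by linarith) (by linarith) h11 (by linarith) (by linarith)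
        (by linarith)
  rw [e1]
  have b1 := rsf_box hφ (show s ≤ s + ε by linarith) (show s + ε < t - ε by linarith)
    (show t - ε ≤ t + ε by linarith)
  have b2 := rsf_box hφ (show s ≤ s + ε by linarith) (show s + ε < (s + t) / 2 by linarith)
    (show (s + t) / 2 ≤ t - ε by linarith)
  have b3 := rsf_mono hφ (show s ≤ s + ε by linarith) (show s + ε < t + ε by linarith)
  have b4 := rsf_box hφ (show s - ε ≤ s by linarith) hst (show t ≤ t + ε by linarith)
  have b5 := rsf_anti hφ (show s - ε < t by linarith) (show t ≤ t + ε by linarith)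
  unfold bx
  omega

lemma multInf_eq (hφ : Continuous φ) {R : M} (hR : ∀ P, φ R ≤ φ P) {B : ℝ} (hB : ∀ P, φ P ≤ B)
    (k : ℝ) : multInf φ k = if k = φ R then 1 else 0 := by
  have hlarge : ∀ᶠ ε in 𝓝[>] (0 : ℝ), max B (k + 1) < 1 / ε := by
    have := (tendsto_inv_nhdsGT_zero (𝕜 := ℝ)).eventually_gt_atTop (max B (k + 1))
    simpa using this
  have hzero : ∀ x y, x < φ R → rsf φ x y = 0 := fun x y hx =>
    rsf_eq_zero fun P => lt_of_lt_of_le hx (hR P)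
  unfold multInf
  apply IsLeast.csInf_eq
  split_ifs with hk
  · subst hk
    constructor
    · obtain ⟨ε, h1, h2, h3⟩ := (hlarge.and (ev_pos.and (ev_lt one_pos))).exists
      refine ⟨ε, h2, ?_, ?_⟩
      · linarith [le_max_right B (φ R + 1)]
      · rw [hzero (φ R - ε) _ (by linarith), rsf_eq_one (P := R)
          (fun P => (hB P).trans ((le_max_left _ _).trans h1.le)) (by linarith)]
        simp
    · rintro z ⟨ε, h1, h2, rfl⟩
      rw [hzero (φ R - ε) _ (by linarith)]
      have h3 := rsf_anti hφ h2 (le_max_left (1 / ε) B)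
      rw [rsf_eq_one (P := R) (fun P => (hB P).trans (le_max_right _ _)) (by linarith)] at h3
      push_cast
      omega
  · constructor
    · rcases lt_or_gt_of_ne hk with h | h
      · obtain ⟨ε, h1, h2, h3, h4⟩ :=
          (hlarge.and (ev_pos.and ((ev_lt one_pos).and (ev_lt (sub_pos.2 h))))).exists
        refine ⟨ε, h2, ?_, ?_⟩
        · linarith [le_max_right B (k + 1)]
        · rw [hzero (k - ε) _ (by linarith), hzero (k + ε) _ (by linarith)]
          simp
      · obtain ⟨ε, h1, h2, h3, h4⟩ :=
          (hlarge.and (ev_pos.and ((ev_lt one_pos).and (ev_lt (sub_pos.2 h))))).exists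
        refine ⟨ε, h2, ?_, ?_⟩
        · linarith [le_max_right B (k + 1)]
        · have hb := fun P => (hB P).trans ((le_max_left B (k + 1)).trans h1.le)
          rw [rsf_eq_one (P := R) hb (by linarith), rsf_eq_one (P := R) hb (by linarith)]
          simp
    · rintro z ⟨ε, h1, h2, rfl⟩
      have := rsf_mono hφ (show k - ε ≤ k + ε by linarith) h2
      omega

lemma main_aux (hφ : Continuous φ) {R : M} (hR : ∀ P, φ R ≤ φ P) {B : ℝ} (hB : ∀ P, φ P ≤ B)
    (xb yb : ℝ) (hxy : xb < yb) :
    ∃ S T : Finset ℝ, (∀ s ∈ S, s ≤ xb) ∧ (∀ t ∈ T, yb < t) ∧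
      (∀ s t, s < t → s ≤ xb → yb < t → mult φ (s, t) ≠ 0 → s ∈ S ∧ t ∈ T) ∧
      (rsf φ xb yb : ℤ) = ∑ s ∈ S, ∑ t ∈ T, mult φ (s, t) + rsf φ xb (max B yb) := by
  set Y := max B yb with hY
  have hyY : yb ≤ Y := le_max_right _ _
  obtain ⟨X, hX⟩ : ∃ X, X = min (φ R - 1) xb := ⟨_, rfl⟩
  have hXx : X ≤ xb := hX ▸ min_le_right _ _
  have hXR : X < φ R := by have := min_le_left (φ R - 1) xb; rw [← hX] at this; linarith
  have hzero : ∀ x y, x ≤ X → rsf φ x y = 0 := fun x y hx =>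
    rsf_eq_zero fun P => lt_of_le_of_lt hx (lt_of_lt_of_le hXR (hR P))
  have htop : ∀ x y y', Y ≤ y → Y ≤ y' → rsf φ x y = rsf φ x y' := by
    intro x y y' hy hy'
    have hBY : B ≤ Y := le_max_left _ _
    by_cases h : φ R ≤ x
    · rw [rsf_eq_one (fun P => (hB P).trans (hBY.trans hy)) h,
        rsf_eq_one (fun P => (hB P).trans (hBY.trans hy')) h]
    · push Not at h
      rw [rsf_eq_zero fun P => lt_of_lt_of_le h (hR P),
        rsf_eq_zero fun P => lt_of_lt_of_le h (hR P)]
  obtain ⟨S, hS1, hS2⟩ := step_set (fun x => (rsf φ x yb : ℤ) - rsf φ x Y) X xb hXx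
    (by
      intro u v hu huv hv
      have := rsf_box hφ huv (lt_of_le_of_lt hv hxy) hyY
      omega)
    (by
      intro u hu hub
      filter_upwards [rsf_right_x hφ (hub.trans hxy),
        rsf_right_x hφ (hub.trans (hxy.trans_le hyY))] with v h1 h2
      rw [h1, h2])
  obtain ⟨T, hT1, hT2⟩ := step_set (fun y => -(rsf φ xb y : ℤ)) yb Y hyY
    (by
      intro u v hu huv hv
      have := rsf_anti hφ (lt_of_lt_of_le hxy hu) huv
      omega)
    (by
      intro u hu hub
      filter_upwards [rsf_right_y hφ (lt_of_lt_of_le hxy hu)] with v h1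
      rw [h1])
  refine ⟨S, T, fun s hs => (hS1 s hs).2, fun t ht => (hT1 t ht).1, ?_, ?_⟩
  · intro s t hst hs ht hne
    by_cases hsX : s ≤ X
    · exfalso
      obtain ⟨ε, h1, h2⟩ := ((mult_ev hφ hst).and ev_pos).exists
      apply hne
      rw [h1]
      unfold bx
      rw [hzero s _ hsX, hzero s _ hsX, hzero (s - ε) _ (by linarith),
        hzero (s - ε) _ (by linarith)]
      simp
    by_cases htY : Y < t
    · exfalso
      obtain ⟨ε, h1, h2, h3⟩ := ((mult_ev hφ hst).and (ev_pos.and (ev_lt (sub_pos.2 htY)))).exists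
      apply hne
      rw [h1]
      unfold bx
      rw [htop s (t - ε) t (by linarith) htY.le, htop (s - ε) (t - ε) t (by linarith) htY.le]
      ring
    push Not at hsX htY
    by_contra hnot
    rw [not_and_or] at hnot
    rcases hnot with hn | hn
    · obtain ⟨ε, h1, h2, h3, h4, h5⟩ := ((mult_ev hφ hst).and (ev_pos.and
        ((ev_lt (sub_pos.2 hsX)).and ((ev_lt (sub_pos.2 ht)).and (ev_gap S hn))))).exists
      have e := hS2 (s - ε) s (by linarith) (by linarith) hs h5
      have l1 := bx_nonneg hφ (show s - ε ≤ s by linarith) (show s < t - ε by linarith)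
        (show t - ε ≤ t by linarith)
      have l2 := bx_sub hφ (le_refl (s - ε)) (show s - ε ≤ s by linarith) (le_refl s)
        (lt_of_le_of_lt hs hxy) (show yb ≤ t - ε by linarith) (show t - ε ≤ t by linarith) htY
      apply hne
      rw [h1]
      simp only [bx] at *
      omega
    · obtain ⟨ε, h1, h2, h3, h4, h5⟩ := ((mult_ev hφ hst).and (ev_pos.and
        ((ev_lt (sub_pos.2 hsX)).and ((ev_lt (sub_pos.2 ht)).and (ev_gap T hn))))).exists
      have e := hT2 (t - ε) t (by linarith) (by linarith) htY h5
      have l1 := bx_nonneg hφ (show s - ε ≤ s by linarith) (show s < t - ε by linarith)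
        (show t - ε ≤ t by linarith)
      have l2 := bx_sub hφ (show X ≤ s - ε by linarith) (show s - ε ≤ s by linarith) hs
        (show xb < t - ε by linarith) (le_refl (t - ε)) (show t - ε ≤ t by linarith) (le_refl t)
      apply hne
      rw [h1]
      simp only [bx, hzero X _ le_rfl] at *
      omega
  · have hev : ∀ᶠ ε in 𝓝[>] (0 : ℝ), ∀ s ∈ S, ∀ t ∈ T,
        mult φ (s, t) = bx φ (s - ε) s (t - ε) t := by
      rw [Filter.eventually_all_finset]
      intro s hs
      rw [Filter.eventually_all_finset]
      intro t ht
      exact mult_ev hφ (lt_of_le_of_lt (hS1 s hs).2 (hxy.trans (hT1 t ht).1))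
    obtain ⟨ε, hm, ⟨hSε, hsumS⟩, ⟨hTε, hsumT⟩, hε⟩ := (hev.and ((step_sum X S xb hXx hS1).and
      ((step_sum yb T Y hyY hT1).and ev_pos))).exists
    have e1 := hsumS _ hS2
    simp only [hzero X _ le_rfl] at e1
    have e2 : ∀ s ∈ S, ((rsf φ s yb : ℤ) - rsf φ s Y) - ((rsf φ (s - ε) yb : ℤ) - rsf φ (s - ε) Y)
        = ∑ t ∈ T, mult φ (s, t) := by
      intro s hs
      have h := hsumT (fun y => (rsf φ (s - ε) y : ℤ) - rsf φ s y) (by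
        intro u v hu huv hv hno
        have e := hT2 u v hu huv hv hno
        have hsx := (hS1 s hs).2
        have l1 := bx_nonneg hφ (show s - ε ≤ s by linarith) (show s < u by linarith) huv
        have l2 := bx_sub hφ (hSε s hs) (show s - ε ≤ s by linarith) hsx
          (show xb < u by linarith) (le_refl u) huv (le_refl v)
        simp only [bx, hzero X _ le_rfl] at *
        omega)
      have h2 : ∑ t ∈ T, mult φ (s, t) = ∑ t ∈ T, ((rsf φ (s - ε) t : ℤ) - rsf φ s t -
          ((rsf φ (s - ε) (t - ε) : ℤ) - rsf φ s (t - ε))) := by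
        apply Finset.sum_congr rfl
        intro t ht
        rw [hm s hs t ht, bx]
        ring
      rw [h2, ← h]
      ring
    rw [Finset.sum_congr rfl e2] at e1
    push_cast at e1
    linarith

end
end comb

theorem representation_theorem
    {M : Type*} [TopologicalSpace M] [CompactSpace M] [ConnectedSpace M] [LocallyConnectedSpace M] [T2Space M] {φ : M → ℝ} (hφ : Continuous φ)
    (xb yb : ℝ) (hxy : xb < yb) :
    {p : ℝ × ℝ | p.1 < p.2 ∧ p.1 ≤ xb ∧ yb < p.2 ∧ mult φ p ≠ 0}.Finite ∧
    {k : ℝ | k ≤ xb ∧ multInf φ k ≠ 0}.Finite ∧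
    (rsf φ xb yb : ℤ) =
      (∑ᶠ p ∈ {p : ℝ × ℝ | p.1 < p.2 ∧ p.1 ≤ xb ∧ yb < p.2}, mult φ p) +
      ∑ᶠ k ∈ {k : ℝ | k ≤ xb}, multInf φ k := by
  obtain ⟨R, -, hR⟩ := isCompact_univ.exists_isMinOn (univ_nonempty (α := M)) hφ.continuousOn
  obtain ⟨R', -, hR'⟩ := isCompact_univ.exists_isMaxOn (univ_nonempty (α := M)) hφ.continuousOn
  have hR : ∀ P, φ R ≤ φ P := fun P => hR (mem_univ P)
  have hB : ∀ P, φ P ≤ φ R' := fun P => hR' (mem_univ P)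
  obtain ⟨S, T, hS, hT, hsupp, hsum⟩ := main_aux hφ hR hB xb yb hxy
  have hinf := multInf_eq hφ hR hB
  refine ⟨?_, ?_, ?_⟩
  · refine (S ×ˢ T).finite_toSet.subset ?_
    rintro ⟨s, t⟩ ⟨h1, h2, h3, h4⟩
    simpa using hsupp s t h1 h2 h3 h4
  · refine (finite_singleton (φ R)).subset ?_
    rintro k ⟨_, hk⟩
    by_contra hne
    exact hk (by rw [hinf, if_neg (by simpa using hne)])
  · have e1 : (∑ᶠ p ∈ {p : ℝ × ℝ | p.1 < p.2 ∧ p.1 ≤ xb ∧ yb < p.2}, mult φ p)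
        = ∑ p ∈ S ×ˢ T, mult φ p := by
      apply finsum_mem_eq_sum_of_inter_support_eq
      ext ⟨s, t⟩
      constructor
      · rintro ⟨⟨h1, h2, h3⟩, h4⟩
        exact ⟨by simpa using hsupp s t h1 h2 h3 h4, h4⟩
      · rintro ⟨h1, h2⟩
        have h1 : s ∈ S ∧ t ∈ T := by simpa using h1
        exact ⟨⟨lt_of_le_of_lt (hS s h1.1) (hxy.trans (hT t h1.2)), hS s h1.1, hT t h1.2⟩, h2⟩
    have e2 : ∑ᶠ k ∈ {k : ℝ | k ≤ xb}, multInf φ k = rsf φ xb (max (φ R') yb) := by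
      by_cases h : φ R ≤ xb
      · rw [rsf_eq_one (fun P => (hB P).trans (le_max_left _ _)) h]
        rw [finsum_mem_eq_sum_of_inter_support_eq (t := {φ R}) (multInf φ)]
        · simp [hinf]
        · ext k
          simp only [hinf, mem_inter_iff, Function.mem_support, Finset.coe_singleton,
            mem_singleton_iff, mem_ofPred_eq]
          constructor
          · rintro ⟨h1, h2⟩
            by_cases hk : k = φ R
            · exact ⟨hk, h2⟩
            · simp [hk] at h2
          · rintro ⟨rfl, h2⟩
            exact ⟨h, h2⟩
      · push Not at h
        rw [rsf_eq_zero fun P => lt_of_lt_of_le h (hR P)]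
        rw [finsum_mem_eq_zero_of_forall_eq_zero]
        · simp
        · intro k hk
          have hk : k ≤ xb := hk
          rw [hinf, if_neg (by intro h'; linarith)]
    rw [e1, e2, hsum, Finset.sum_product]
end

section
/- Matching Stability Theorem: Let (M,φ) be a size pair, ε ≥ 0, and ψ : M → ℝ continuous with max_{P∈M} |φ(P) − ψ(P)| ≤ ε. Then the matching distance between ℓ*_{(M,φ)} and ℓ*_{(M,ψ)} satisfies d_match(ℓ*_{(M,φ)}, ℓ*_{(M,ψ)}) ≤ ε. -/
open Set Topology
open scoped ENNReal

namespace MS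

def Box (R : ℝ → ℝ → ℤ) (x1 x2 y1 y2 : ℝ) : ℤ := R x2 y1 - R x1 y1 - R x2 y2 + R x1 y2

structure Good (R : ℝ → ℝ → ℤ) : Prop where
  box : ∀ x1 x2 y1 y2, x1 ≤ x2 → x2 < y1 → y1 ≤ y2 → 0 ≤ Box R x1 x2 y1 y2
  zero : ∃ K, ∀ x y, x < y → (x ≤ -K ∨ K ≤ y) → R x y = 0

theorem Good.mono {R : ℝ → ℝ → ℤ} (h : Good R) {x1 x2 y : ℝ} (h1 : x1 ≤ x2) (h2 : x2 < y) :
    R x1 y ≤ R x2 y := by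
  obtain ⟨K, hK⟩ := h.zero
  have := h.box x1 x2 y (max y K) h1 h2 (le_max_left _ _)
  have e1 := hK x1 (max y K) (lt_max_of_lt_left (by linarith)) (Or.inr (le_max_right _ _))
  have e2 := hK x2 (max y K) (lt_max_of_lt_left (by linarith)) (Or.inr (le_max_right _ _))
  unfold Box at this
  omega

theorem Good.box_mono {R : ℝ → ℝ → ℤ} (h : Good R) {x1 x2 y1 y2 x1' x2' y1' y2' : ℝ}
    (a1 : x1' ≤ x1) (a2 : x1 ≤ x2) (a3 : x2 ≤ x2') (a4 : x2' < y1') (a5 : y1' ≤ y1) (a6 : y1 ≤ y2)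
    (a7 : y2 ≤ y2') : Box R x1 x2 y1 y2 ≤ Box R x1' x2' y1' y2' := by
  have b1 := h.box x1' x1 y1' y2' a1 (by linarith) (by linarith)
  have b2 := h.box x2 x2' y1' y2' a3 (by linarith) (by linarith)
  have b3 := h.box x1 x2 y1' y1 a2 (by linarith) (by linarith)
  have b4 := h.box x1 x2 y2 y2' a2 (by linarith) (by linarith)
  unfold Box at *
  omega

def dual (R : ℝ → ℝ → ℤ) : ℝ → ℝ → ℤ := fun x y => R (-y) (-x)

theorem Good.dual {R : ℝ → ℝ → ℤ} (h : Good R) : Good (dual R) := by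
  refine ⟨fun x1 x2 y1 y2 h1 h2 h3 => ?_, ?_⟩
  · have := h.box (-y2) (-y1) (-x2) (-x1) (by linarith) (by linarith) (by linarith)
    unfold Box MS.dual at *
    omega
  · obtain ⟨K, hK⟩ := h.zero
    refine ⟨K, fun x y hxy hh => hK _ _ (by linarith) ?_⟩
    rcases hh with hh | hh
    · right; linarith
    · left; linarith

theorem sInf_const (f : ℝ → ℤ) (Q : ℝ → Prop) (hQ : ∀ η η', 0 < η → η ≤ η' → Q η' → Q η)
    (hex : ∃ η, 0 < η ∧ Q η) (hm : ∀ η η', 0 < η → η ≤ η' → Q η' → f η ≤ f η')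
    (h0 : ∀ η, 0 < η → Q η → 0 ≤ f η) :
    0 ≤ sInf {z : ℤ | ∃ η, 0 < η ∧ Q η ∧ z = f η} ∧
    ∃ η0, 0 < η0 ∧ Q η0 ∧ ∀ η, 0 < η → η ≤ η0 → f η = sInf {z : ℤ | ∃ η, 0 < η ∧ Q η ∧ z = f η} := by
  have hb : BddBelow {z : ℤ | ∃ η, 0 < η ∧ Q η ∧ z = f η} :=
    ⟨0, by rintro z ⟨η, a, b, rfl⟩; exact h0 _ a b⟩
  have hne : {z : ℤ | ∃ η, 0 < η ∧ Q η ∧ z = f η}.Nonempty := by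
    obtain ⟨η, a, b⟩ := hex
    exact ⟨_, η, a, b, rfl⟩
  obtain ⟨η0, a, b, c⟩ := Int.csInf_mem hne hb
  refine ⟨by rw [c]; exact h0 _ a b, η0, a, b, fun η ha hle => le_antisymm ?_ ?_⟩
  · rw [c]; exact hm _ _ ha hle b
  · exact csInf_le hb ⟨η, ha, hQ _ _ ha hle b, rfl⟩

noncomputable def g (R : ℝ → ℝ → ℤ) (x t : ℝ) : ℤ :=
  sInf {z : ℤ | ∃ η, 0 < η ∧ x + η < t ∧ z = R (x + η) t - R (x - η) t}

noncomputable def mu (R : ℝ → ℝ → ℤ) (x y : ℝ) : ℤ :=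
  sInf {z : ℤ | ∃ η, 0 < η ∧ x + η < y - η ∧ z = Box R (x - η) (x + η) (y - η) (y + η)}

theorem g_spec {R : ℝ → ℝ → ℤ} (h : Good R) {x t : ℝ} (hx : x < t) :
    0 ≤ g R x t ∧ ∃ η0, 0 < η0 ∧ x + η0 < t ∧ ∀ η, 0 < η → η ≤ η0 →
      R (x + η) t - R (x - η) t = g R x t := by
  apply sInf_const (fun η => R (x + η) t - R (x - η) t) (fun η => x + η < t)
  · intro η η' _ _ _; linarith
  · exact ⟨(t - x) / 2, by linarith, by linarith⟩
  · intro η η' h0 h1 h2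
    have := h.mono (x1 := x + η) (x2 := x + η') (by linarith) h2
    have := h.mono (x1 := x - η') (x2 := x - η) (y := t) (by linarith) (by linarith)
    omega
  · intro η h0 h2
    have := h.mono (x1 := x - η) (x2 := x + η) (by linarith) h2
    omega

theorem mu_spec {R : ℝ → ℝ → ℤ} (h : Good R) {x y : ℝ} (hx : x < y) :
    0 ≤ mu R x y ∧ ∃ η0, 0 < η0 ∧ x + η0 < y - η0 ∧ ∀ η, 0 < η → η ≤ η0 →
      Box R (x - η) (x + η) (y - η) (y + η) = mu R x y := by
  apply sInf_const (fun η => Box R (x - η) (x + η) (y - η) (y + η)) (fun η => x + η < y - η)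
  · intro η η' _ _ _; linarith
  · exact ⟨(y - x) / 4, by linarith, by linarith⟩
  · intro η η' h0 h1 h2
    apply h.box_mono <;> linarith
  · intro η h0 h2
    apply h.box <;> linarith

theorem g_anti {R : ℝ → ℝ → ℤ} (h : Good R) {x t t' : ℝ} (hx : x < t) (ht : t ≤ t') :
    g R x t' ≤ g R x t := by
  obtain ⟨-, η1, a1, b1, c1⟩ := g_spec h hx
  obtain ⟨-, η2, a2, b2, c2⟩ := g_spec h (hx.trans_le ht)
  have hp : 0 < min η1 η2 := lt_min a1 a2
  rw [← c1 _ hp (min_le_left _ _), ← c2 _ hp (min_le_right _ _)]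
  have := h.box (x - min η1 η2) (x + min η1 η2) t t' (by linarith)
    (by linarith [min_le_left η1 η2]) ht
  unfold Box at this
  omega

theorem g_zero {R : ℝ → ℝ → ℤ} (h : Good R) : ∃ K, ∀ x t, x < t → K ≤ t → g R x t = 0 := by
  obtain ⟨K, hK⟩ := h.zero
  refine ⟨K, fun x t hx ht => ?_⟩
  obtain ⟨-, η1, a1, b1, c1⟩ := g_spec h hx
  rw [← c1 _ a1 le_rfl, hK _ _ b1 (Or.inr ht), hK _ _ (by linarith) (Or.inr ht)]
  simp

/-- the jump of the jump is the multiplicity -/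
theorem g_mu {R : ℝ → ℝ → ℤ} (h : Good R) {x y : ℝ} (hx : x < y) :
    ∃ η0, 0 < η0 ∧ x + η0 < y - η0 ∧ ∀ η, 0 < η → η ≤ η0 →
      g R x (y - η) - g R x (y + η) = mu R x y := by
  obtain ⟨-, η0, a, b, c⟩ := mu_spec h hx
  refine ⟨η0, a, b, fun η h1 h2 => ?_⟩
  obtain ⟨-, η1, a1, b1, c1⟩ := g_spec h (x := x) (t := y - η) (by linarith)
  obtain ⟨-, η2, a2, b2, c2⟩ := g_spec h (x := x) (t := y + η) (by linarith)
  set m := min η (min η1 η2) with hm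
  have hp : 0 < m := lt_min h1 (lt_min a1 a2)
  have m0 : m ≤ η := min_le_left _ _
  have m1 : m ≤ η1 := (min_le_right _ _).trans (min_le_left _ _)
  have m2 : m ≤ η2 := (min_le_right _ _).trans (min_le_right _ _)
  rw [← c1 m hp m1, ← c2 m hp m2]
  have u1 := c m hp (m0.trans h2)
  have u2 := c η h1 h2
  have v1 : Box R (x - m) (x + m) (y - m) (y + m) ≤ Box R (x - m) (x + m) (y - η) (y + η) := by
    apply h.box_mono <;> linarith
  have v2 : Box R (x - m) (x + m) (y - η) (y + η) ≤ Box R (x - η) (x + η) (y - η) (y + η) := by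
    apply h.box_mono <;> linarith
  have : Box R (x - m) (x + m) (y - η) (y + η) = mu R x y := by omega
  rw [← this]; unfold Box; ring

def Bars (R : ℝ → ℝ → ℤ) : Set (ℝ × ℕ) := {p | ∃ t, p.1 < t ∧ (p.2 : ℤ) < g R p.1 t}

noncomputable def dth (R : ℝ → ℝ → ℤ) (p : ℝ × ℕ) : ℝ :=
  sSup {t | p.1 < t ∧ (p.2 : ℤ) < g R p.1 t}

theorem dth_bdd {R : ℝ → ℝ → ℤ} (h : Good R) (p : ℝ × ℕ) :
    BddAbove {t | p.1 < t ∧ (p.2 : ℤ) < g R p.1 t} := by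
  obtain ⟨K, hK⟩ := g_zero h
  refine ⟨K, fun t ht => ?_⟩
  by_contra hc
  have := hK p.1 t ht.1 (by linarith)
  have := ht.2
  omega

theorem le_dth {R : ℝ → ℝ → ℤ} (h : Good R) (p : ℝ × ℕ) {t : ℝ} (h1 : p.1 < t)
    (h2 : (p.2 : ℤ) < g R p.1 t) : t ≤ dth R p := le_csSup (dth_bdd h p) ⟨h1, h2⟩

theorem dth_le {R : ℝ → ℝ → ℤ} (p : ℝ × ℕ) (hp : p ∈ Bars R) {s : ℝ}
    (hs : ∀ t, p.1 < t → (p.2 : ℤ) < g R p.1 t → t ≤ s) : dth R p ≤ s := by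
  obtain ⟨t, ht⟩ := hp
  exact csSup_le ⟨t, ht⟩ fun t ht => hs t ht.1 ht.2

theorem lt_dth {R : ℝ → ℝ → ℤ} (h : Good R) (p : ℝ × ℕ) (hp : p ∈ Bars R) : p.1 < dth R p := by
  obtain ⟨t, h1, h2⟩ := hp
  exact h1.trans_le (le_dth h p h1 h2)

theorem fiber {R : ℝ → ℝ → ℤ} (h : Good R) {x y : ℝ} (hx : x < y) :
    ∃ a b : ℕ, {p | p ∈ Bars R ∧ (p.1, dth R p) = (x, y)} = Prod.mk x '' Set.Ico a b ∧
      b - a = (mu R x y).toNat := by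
  obtain ⟨η0, e0, e1, e2⟩ := g_mu h hx
  have pos1 := (g_spec h (x := x) (t := y - η0) (by linarith)).1
  have pos2 := (g_spec h (x := x) (t := y + η0) (by linarith)).1
  have key : ∀ η, 0 < η → η ≤ η0 →
      g R x (y - η) = g R x (y - η0) ∧ g R x (y + η) = g R x (y + η0) := by
    intro η h1 h2
    have u1 := e2 η h1 h2
    have u2 := e2 η0 e0 le_rfl
    have v1 : g R x (y - η) ≤ g R x (y - η0) := g_anti h (by linarith) (by linarith)
    have v2 : g R x (y + η0) ≤ g R x (y + η) := g_anti h (by linarith) (by linarith)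
    omega
  refine ⟨(g R x (y + η0)).toNat, (g R x (y - η0)).toNat, ?_, ?_⟩
  · ext ⟨x', k⟩
    simp only [Set.mem_ofPred_eq, Prod.mk.injEq, Set.mem_image, Set.mem_Ico]
    constructor
    · rintro ⟨hp, rfl, hd⟩
      refine ⟨k, ⟨?_, ?_⟩, rfl, rfl⟩
      · by_contra hc
        have := le_dth h (x', k) (t := y + η0) (by simp; linarith) (by simp; omega)
        linarith
      · by_contra hc
        have : dth R (x', k) ≤ y - η0 := by
          apply dth_le _ hp
          intro t ht1 ht2
          by_contra hc2
          have := g_anti h (x := x') (t := y - η0) (t' := t) (by linarith) (by linarith)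
          simp at ht2
          omega
        linarith
    · rintro ⟨k', ⟨hk1, hk2⟩, rfl, rfl⟩
      have hb : ((x, k') : ℝ × ℕ) ∈ Bars R := ⟨y - η0, by simp; linarith, by simp; omega⟩
      refine ⟨hb, rfl, le_antisymm ?_ ?_⟩
      · apply dth_le _ hb
        intro t ht1 ht2
        by_contra hc
        simp only at ht1 ht2
        have hη : 0 < min (t - y) η0 := lt_min (by linarith) e0
        have k1 := (key _ hη (min_le_right _ _)).2
        have := g_anti h (x := x) (t := y + min (t - y) η0) (t' := t) (by linarith)
          (by linarith [min_le_left (t - y) η0])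
        omega
      · apply le_of_forall_lt
        intro s hs
        have hη : 0 < min ((y - s) / 2) η0 := lt_min (by linarith) e0
        have k1 := (key _ hη (min_le_right _ _)).1
        have := le_dth h (x, k') (t := y - min ((y - s) / 2) η0)
          (by simp only; linarith [min_le_right ((y - s) / 2) η0]) (by simp only; omega)
        linarith [min_le_left ((y - s) / 2) η0]
  · have u2 := e2 η0 e0 le_rfl
    omega

/-- the point of a bar -/
noncomputable def pt (R : ℝ → ℝ → ℤ) (p : Bars R) : ℝ × ℝ := (p.1.1, dth R p.1)

theorem pt_fiber {R : ℝ → ℝ → ℤ} (h : Good R) {x y : ℝ} (hx : x < y) :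
    Finite {p : Bars R // pt R p = (x, y)} ∧
      Nat.card {p : Bars R // pt R p = (x, y)} = (mu R x y).toNat := by
  obtain ⟨a, b, h1, h2⟩ := fiber h hx
  let e : {p : Bars R // pt R p = (x, y)} ≃
      ↥{p : ℝ × ℕ | p ∈ Bars R ∧ (p.1, dth R p) = (x, y)} :=
    Equiv.subtypeSubtypeEquivSubtypeInter (fun p => p ∈ Bars R)
      (fun p => (p.1, dth R p) = (x, y))
  have hi : Function.Injective (Prod.mk x : ℕ → ℝ × ℕ) := fun a b h => by simpa using h
  constructor
  · have : Finite ↥{p : ℝ × ℕ | p ∈ Bars R ∧ (p.1, dth R p) = (x, y)} := by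
      rw [h1]; exact ((Set.finite_Ico a b).image _).to_subtype
    exact Finite.of_equiv _ e.symm
  · rw [Nat.card_congr e, h1, Nat.card_image_of_injective hi, ← h2]
    simp

theorem pt_lt {R : ℝ → ℝ → ℤ} (h : Good R) (p : Bars R) : (pt R p).1 < (pt R p).2 :=
  lt_dth h p.1 p.2

theorem mu_pos {R : ℝ → ℝ → ℤ} (h : Good R) (p : Bars R) : 0 < mu R (pt R p).1 (pt R p).2 := by
  obtain ⟨h1, h2⟩ := pt_fiber h (pt_lt h p)
  have : Nonempty {q : Bars R // pt R q = ((pt R p).1, (pt R p).2)} := ⟨⟨p, rfl⟩⟩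
  have := Nat.card_pos (α := {q : Bars R // pt R q = ((pt R p).1, (pt R p).2)})
  omega

theorem bars_countable {R : ℝ → ℝ → ℤ} (h : Good R) : (Bars R).Countable := by
  let F : ℚ → ℚ → ℝ → ℤ := fun q' q z => R (min z q') q
  have hF : ∀ q' q : ℚ, q' < q → Monotone (F q' q) := by
    intro q' q hq z z' hz
    apply h.mono (min_le_min_right _ hz)
    exact (min_le_right _ _).trans_lt (by exact_mod_cast hq)
  have hD : (⋃ q' : ℚ, ⋃ q : ℚ, ⋃ _ : q' < q, {z | ¬ ContinuousAt (F q' q) z}).Countable := by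
    refine Set.countable_iUnion fun q' => Set.countable_iUnion fun q => Set.countable_iUnion
      fun hq => (hF q' q hq).countable_not_continuousAt
  refine (hD.prod (Set.countable_univ (α := ℕ))).mono ?_
  rintro ⟨x, k⟩ ⟨t, h1, h2⟩
  simp only at h1 h2
  obtain ⟨q, hq1, hq2⟩ := exists_rat_btwn h1
  obtain ⟨q', hq1', hq2'⟩ := exists_rat_btwn hq1
  refine ⟨?_, Set.mem_univ _⟩
  simp only [Set.mem_iUnion]
  refine ⟨q', q, by exact_mod_cast hq2', fun hc => ?_⟩
  have h3 := g_anti h hq1 hq2.le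
  obtain ⟨-, η, e1, e2, e3⟩ := g_spec h hq1
  have hev : ∀ᶠ z in 𝓝 x, F q' q z = F q' q x := by
    have := hc.eventually (eventually_mem_nhds_iff.mpr (IsOpen.mem_nhds (isOpen_discrete {F q' q x}) rfl))
    filter_upwards [hc (IsOpen.mem_nhds (isOpen_discrete {F q' q x}) rfl)] with z hz
    exact hz
  obtain ⟨r, hr, hr2⟩ := Metric.eventually_nhds_iff.1 hev
  set m := min η (min (r / 2) (q' - x)) with hm
  have hp : 0 < m := lt_min e1 (lt_min (by linarith) (by linarith))
  have m0 : m ≤ η := min_le_left _ _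
  have m1 : m ≤ r / 2 := (min_le_right _ _).trans (min_le_left _ _)
  have m2 : m ≤ q' - x := (min_le_right _ _).trans (min_le_right _ _)
  have w1 := hr2 (y := x + m) (by simp [abs_of_pos hp]; linarith)
  have w2 := hr2 (y := x - m) (by simp [abs_of_pos hp]; linarith)
  simp only [F] at w1 w2
  rw [min_eq_left (by linarith)] at w1 w2
  have := e3 m hp m0
  omega

structure Dom (RI RP : ℝ → ℝ → ℤ) (e : ℝ) : Prop where
  le1 : ∀ x1 x2 t, x1 ≤ x2 → x2 < t → RI x2 t - RI x1 t ≤ RP x2 t - RP x1 t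
  le2 : ∀ x1 x2 t, x1 ≤ x2 → x2 + e < t → RP x2 t - RP x1 t ≤ RI x2 (t - e) - RI x1 (t - e)

theorem Dom.g1 {RI RP : ℝ → ℝ → ℤ} {e : ℝ} (hD : Dom RI RP e) (hI : Good RI) (hP : Good RP)
    {x t : ℝ} (hx : x < t) : g RI x t ≤ g RP x t := by
  obtain ⟨-, η1, a1, b1, c1⟩ := g_spec hI hx
  obtain ⟨-, η2, a2, b2, c2⟩ := g_spec hP hx
  have hp : 0 < min η1 η2 := lt_min a1 a2
  rw [← c1 _ hp (min_le_left _ _), ← c2 _ hp (min_le_right _ _)]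
  exact hD.le1 _ _ _ (by linarith) (by linarith [min_le_left η1 η2])

theorem Dom.g2 {RI RP : ℝ → ℝ → ℤ} {e : ℝ} (hD : Dom RI RP e) (he : 0 ≤ e) (hI : Good RI)
    (hP : Good RP) {x t : ℝ} (hx : x + e < t) : g RP x t ≤ g RI x (t - e) := by
  obtain ⟨-, η1, a1, b1, c1⟩ := g_spec hI (x := x) (t := t - e) (by linarith)
  obtain ⟨-, η2, a2, b2, c2⟩ := g_spec hP (x := x) (t := t) (by linarith)
  have hp : 0 < min η1 η2 := lt_min a1 a2
  rw [← c1 _ hp (min_le_left _ _), ← c2 _ hp (min_le_right _ _)]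
  exact hD.le2 _ _ _ (by linarith) (by linarith [min_le_left η1 η2])

theorem Dom.emb {RI RP : ℝ → ℝ → ℤ} {e : ℝ} (hD : Dom RI RP e) (he : 0 ≤ e) (hI : Good RI)
    (hP : Good RP) : ∃ u : Bars RI → Bars RP, Function.Injective u ∧
      (∀ p, (pt RP (u p)).1 = (pt RI p).1 ∧ (pt RI p).2 ≤ (pt RP (u p)).2 ∧
        (pt RP (u p)).2 ≤ (pt RI p).2 + e) ∧
      (∀ q, q ∉ Set.range u → (pt RP q).2 ≤ (pt RP q).1 + e) := by
  have hsub : Bars RI ⊆ Bars RP := by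
    rintro p ⟨t, h1, h2⟩
    exact ⟨t, h1, h2.trans_le (hD.g1 hI hP h1)⟩
  refine ⟨fun p => ⟨p.1, hsub p.2⟩, ?_, ?_, ?_⟩
  · intro p q hpq
    simpa [Subtype.ext_iff] using hpq
  · rintro ⟨p, hp⟩
    refine ⟨rfl, ?_, ?_⟩
    · exact dth_le p hp fun t h1 h2 => le_dth hP p h1 (h2.trans_le (hD.g1 hI hP h1))
    · refine dth_le p (hsub hp) fun t h1 h2 => ?_
      by_contra hc
      have h0 := lt_dth hI p hp
      simp only [pt] at hc
      have := le_dth hI p (t := t - e) (by linarith)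
        (h2.trans_le (hD.g2 he hI hP (by linarith)))
      linarith
  · rintro ⟨q, hq⟩ hn
    refine dth_le q hq fun t h1 h2 => ?_
    by_contra hc
    apply hn
    simp only [pt] at hc
    exact ⟨⟨q, t - e, by linarith, h2.trans_le (hD.g2 he hI hP (by linarith))⟩, rfl⟩

theorem mu_dual (R : ℝ → ℝ → ℤ) (x y : ℝ) : mu (dual R) (-y) (-x) = mu R x y := by
  unfold mu
  congr 1
  ext z
  simp only [Set.mem_ofPred_eq]
  refine exists_congr fun η => and_congr_right fun _ => and_congr ?_ ?_
  · constructor <;> intro h <;> linarith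
  · unfold Box dual
    rw [show -(-x - η) = x + η by ring, show -(-x + η) = x - η by ring,
      show -(-y - η) = y + η by ring, show -(-y + η) = y - η by ring]
    constructor <;> intro h <;> omega

theorem dual_equiv {R : ℝ → ℝ → ℤ} (h : Good R) :
    ∃ E : Bars R ≃ Bars (dual R), ∀ p, (pt (dual R) (E p)).1 = -(pt R p).2 ∧
      (pt (dual R) (E p)).2 = -(pt R p).1 := by
  have H : ∀ c : ℝ × ℝ, Nonempty ({p : Bars R // pt R p = c} ≃
      {p : Bars (dual R) // (-(pt (dual R) p).2, -(pt (dual R) p).1) = c}) := by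
    rintro ⟨x, y⟩
    have e2 : {p : Bars (dual R) // (-(pt (dual R) p).2, -(pt (dual R) p).1) = (x, y)} ≃
        {p : Bars (dual R) // pt (dual R) p = (-y, -x)} := by
      refine Equiv.subtypeEquivRight fun p => ?_
      rw [Prod.ext_iff, Prod.ext_iff]
      constructor
      · rintro ⟨h1, h2⟩; constructor <;> simp only at * <;> linarith
      · rintro ⟨h1, h2⟩; constructor <;> simp only at * <;> linarith
    by_cases hxy : x < y
    · obtain ⟨f1, c1⟩ := pt_fiber h hxy
      obtain ⟨f2, c2⟩ := pt_fiber h.dual (x := -y) (y := -x) (by linarith)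
      rw [mu_dual] at c2
      exact ⟨(Finite.card_eq.1 (c1.trans c2.symm)).some.trans e2.symm⟩
    · have i1 : IsEmpty {p : Bars R // pt R p = (x, y)} := ⟨fun p => by
        have := pt_lt h p.1
        rw [p.2] at this
        exact hxy this⟩
      have i2 : IsEmpty {p : Bars (dual R) // pt (dual R) p = (-y, -x)} := ⟨fun p => by
        have := pt_lt h.dual p.1
        rw [p.2] at this
        simp only at this
        exact hxy (by linarith)⟩
      exact ⟨(Equiv.equivOfIsEmpty _ _).trans e2.symm⟩
  let E := Equiv.ofFiberEquiv fun c => (H c).some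
  refine ⟨E, fun p => ?_⟩
  have := Equiv.ofFiberEquiv_map (fun c => (H c).some) p
  rw [Prod.ext_iff] at this
  obtain ⟨h1, h2⟩ := this
  simp only at h1 h2
  constructor <;> linarith

/-! ### representative sequences -/

open scoped Classical in
noncomputable def mkSeq {B D : Type*} (k : ℝ) (p : B → ℝ × ℝ) (dd : D → ℝ) (s : ℕ → B ⊕ D) :
    ℕ → ℝ × EReal
  | 0 => (k, ⊤)
  | n + 1 => Sum.elim (fun b => ((p b).1, ((p b).2 : EReal))) (fun d => (dd d, (dd d : EReal))) (s n)

theorem isRep {M : Type*} [TopologicalSpace M] (φ : M → ℝ) {B D : Type*} (k : ℝ)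
    (hk : 0 < multInf φ k) (p : B → ℝ × ℝ) (dd : D → ℝ) (s : ℕ ≃ B ⊕ D) [Infinite D]
    (h1 : ∀ b, (p b).1 < (p b).2) (h2 : ∀ b, 0 < mult φ ((p b).1, (p b).2))
    (h3 : ∀ x y, x < y → Nat.card {b // p b = (x, y)} = (mult φ (x, y)).toNat) :
    IsRepSeq φ (mkSeq k p dd s) := by
  refine ⟨⟨k, rfl, hk⟩, ?_, ?_, ?_⟩
  · rintro (_ | n) hi
    · omega
    · simp only [mkSeq]
      rcases s n with b | d
      · left; exact ⟨_, _, rfl, h1 b, h2 b⟩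
      · right; exact ⟨_, rfl⟩
  · intro x y hxy _
    rw [← h3 x y hxy]
    have : {i : ℕ | mkSeq k p dd s i = (x, (y : EReal))} =
        (fun b => s.symm (Sum.inl b) + 1) '' {b | p b = (x, y)} := by
      ext i
      simp only [Set.mem_ofPred_eq, Set.mem_image]
      constructor
      · rcases i with _ | n
        · intro h
          simp [mkSeq] at h
        · intro h
          simp only [mkSeq] at h
          rcases hs : s n with b | d
          · rw [hs] at h
            simp only [Sum.elim_inl, Prod.mk.injEq, EReal.coe_eq_coe_iff] at h
            exact ⟨b, Prod.ext h.1 h.2, by rw [← hs]; simp⟩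
          · rw [hs] at h
            simp only [Sum.elim_inr, Prod.mk.injEq, EReal.coe_eq_coe_iff] at h
            linarith
      · rintro ⟨b, hb, rfl⟩
        simp [mkSeq, hb]
    rw [this, Set.ncard_image_of_injective]
    · rfl
    · intro b b' h
      simpa using h
  · have hi : Function.Injective (fun d : D => s.symm (Sum.inr d) + 1) := by
      intro b b' h
      simpa using h
    refine (Set.infinite_range_of_injective hi).mono ?_
    rintro _ ⟨d, rfl⟩
    exact ⟨dd d, by simp [mkSeq]⟩

theorem eDist_match {x y x' y' ε : ℝ} (h1 : |x - x'| ≤ ε) (h2 : |y - y'| ≤ ε) :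
    eDist (x, (y : EReal)) (x', (y' : EReal)) ≤ ENNReal.ofReal ε := by
  unfold eDist
  simp only [EReal.coe_ne_top, and_self, or_self, if_false, EReal.toReal_coe]
  exact ENNReal.ofReal_le_ofReal ((min_le_left _ _).trans (max_le h1 h2))

theorem eDist_short {x y x' y' ε : ℝ} (h1 : y - x ≤ 2 * ε) (h2 : y' - x' ≤ 2 * ε) :
    eDist (x, (y : EReal)) (x', (y' : EReal)) ≤ ENNReal.ofReal ε := by
  unfold eDist
  simp only [EReal.coe_ne_top, and_self, or_self, if_false, EReal.toReal_coe]
  exact ENNReal.ofReal_le_ofReal ((min_le_right _ _).trans (max_le (by linarith) (by linarith)))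

theorem eDist_inf {x x' ε : ℝ} (h1 : |x - x'| ≤ ε) :
    eDist (x, ⊤) (x', ⊤) ≤ ENNReal.ofReal ε := by
  unfold eDist
  simp only [and_self, if_true]
  exact ENNReal.ofReal_le_ofReal h1

/-- abstract matching -/
theorem assemble {M : Type*} [TopologicalSpace M] (φ ψ : M → ℝ) {BP BQ T : Type*}
    [Countable BP] [Countable BQ] (ε k k' : ℝ) (hε : 0 ≤ ε)
    (hk : 0 < multInf φ k) (hk' : 0 < multInf ψ k') (hkk : |k - k'| ≤ ε)
    (p : BP → ℝ × ℝ) (q : BQ → ℝ × ℝ)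
    (p1 : ∀ b, (p b).1 < (p b).2) (p2 : ∀ b, 0 < mult φ ((p b).1, (p b).2))
    (p3 : ∀ x y, x < y → Nat.card {b // p b = (x, y)} = (mult φ (x, y)).toNat)
    (q1 : ∀ b, (q b).1 < (q b).2) (q2 : ∀ b, 0 < mult ψ ((q b).1, (q b).2))
    (q3 : ∀ x y, x < y → Nat.card {b // q b = (x, y)} = (mult ψ (x, y)).toNat)
    (u : T → BP) (hu : Function.Injective u) (v : T → BQ) (hv : Function.Injective v)
    (huv : ∀ t, |(p (u t)).1 - (q (v t)).1| ≤ ε ∧ |(p (u t)).2 - (q (v t)).2| ≤ ε)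
    (hu' : ∀ b, b ∉ Set.range u → (p b).2 - (p b).1 ≤ 2 * ε)
    (hv' : ∀ b, b ∉ Set.range v → (q b).2 - (q b).1 ≤ 2 * ε) :
    dMatch φ ψ ≤ ENNReal.ofReal ε := by
  classical
  have : Countable T := hu.countable
  let U : Type _ := ↥((Set.range u)ᶜ)
  let V : Type _ := ↥((Set.range v)ᶜ)
  let wP : T ⊕ U ≃ BP :=
    ((Equiv.ofInjective u hu).sumCongr (Equiv.refl _)).trans (Equiv.Set.sumCompl (Set.range u))
  let wQ : T ⊕ V ≃ BQ :=
    ((Equiv.ofInjective v hv).sumCongr (Equiv.refl _)).trans (Equiv.Set.sumCompl (Set.range v))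
  have : Countable ((T ⊕ U) ⊕ (V ⊕ ℕ)) := inferInstance
  obtain ⟨e⟩ : Nonempty (ℕ ≃ (T ⊕ U) ⊕ (V ⊕ ℕ)) := nonempty_equiv_of_countable
  let dP : V ⊕ ℕ → ℝ := Sum.elim (fun b => (q b.1).1) (fun _ => 0)
  let dQ : U ⊕ ℕ → ℝ := Sum.elim (fun b => (p b.1).1) (fun _ => 0)
  let sP : ℕ ≃ BP ⊕ (V ⊕ ℕ) := e.trans (wP.sumCongr (Equiv.refl _))
  let sQ : ℕ ≃ BQ ⊕ (U ⊕ ℕ) :=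
    e.trans ((Equiv.sumSumSumComm _ _ _ _).trans (wQ.sumCongr (Equiv.refl _)))
  have ra := isRep φ k hk p dP sP p1 p2 p3
  have rb := isRep ψ k' hk' q dQ sQ q1 q2 q3
  have hle : dMatch φ ψ ≤ dMatchSeq (mkSeq k p dP sP) (mkSeq k' q dQ sQ) :=
    sInf_le ⟨_, _, ra, rb, rfl⟩
  refine hle.trans ?_
  refine (iInf_le _ ⟨id, Function.bijective_id⟩).trans ?_
  refine iSup_le fun i => ?_
  rcases i with _ | n
  · exact eDist_inf hkk
  · simp only [id, mkSeq]
    rcases he : e n with (t | b) | (b | j)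
    · have hp : sP n = Sum.inl (u t) := by simp [sP, he, wP]; rfl
      have hq : sQ n = Sum.inl (v t) := by simp [sQ, he, wQ]; rfl
      rw [hp, hq]
      exact eDist_match (huv t).1 (huv t).2
    · have hp : sP n = Sum.inl b.1 := by simp [sP, he, wP]; rfl
      have hq : sQ n = Sum.inr (Sum.inl b) := by simp [sQ, he, wQ]
      rw [hp, hq]
      exact eDist_short (hu' _ b.2) (by linarith)
    · have hp : sP n = Sum.inr (Sum.inl b) := by simp [sP, he, wP]
      have hq : sQ n = Sum.inl b.1 := by simp [sQ, he, wQ]; rfl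
      rw [hp, hq]
      exact eDist_short (by linarith) (hv' _ b.2)
    · have hp : sP n = Sum.inr (Sum.inr j) := by simp [sP, he, wP]
      have hq : sQ n = Sum.inr (Sum.inr j) := by simp [sQ, he, wQ]
      rw [hp, hq]
      exact eDist_short (by linarith) (by linarith)

/-! ### topology -/

section topo
variable {M : Type*} [TopologicalSpace M]

noncomputable def cnt (S U : Set M) : ℕ := Set.ncard ((fun P => connectedComponentIn U P) '' S)

theorem rsf_eq (φ : M → ℝ) (x y : ℝ) : rsf φ x y = cnt {Q | φ Q ≤ x} {Q | φ Q ≤ y} := by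
  unfold rsf cnt
  congr 1
  ext C
  simp [eq_comm]

theorem count_lemma {α β : Type*} (e e' : α → β) (S S' : Set α) (hS : S' ⊆ S)
    (hf : (e '' S).Finite) (hc : ∀ P ∈ S, ∀ Q ∈ S, e P = e Q → e' P = e' Q) :
    (e' '' S).ncard + (e '' S').ncard ≤ (e '' S).ncard + (e' '' S').ncard := by
  classical
  let f : β → β := fun C => if h : ∃ P ∈ S, e P = C then e' h.choose else C
  have hfe : ∀ P ∈ S, f (e P) = e' P := by
    intro P hP
    have h : ∃ Q ∈ S, e Q = e P := ⟨P, hP, rfl⟩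
    simp only [f, dif_pos h]
    exact hc _ h.choose_spec.1 _ hP h.choose_spec.2
  have i1 : e' '' S = f '' (e '' S) := by
    rw [Set.image_image]; exact Set.image_congr fun P hP => (hfe P hP).symm
  have i2 : e' '' S' = f '' (e '' S') := by
    rw [Set.image_image]; exact Set.image_congr fun P hP => (hfe P (hS hP)).symm
  have hsub : e '' S' ⊆ e '' S := Set.image_mono hS
  rw [i1, i2]
  have h1 : f '' (e '' S) = f '' (e '' S') ∪ f '' (e '' S \ e '' S') := by
    rw [← Set.image_union, Set.union_sdiff_cancel hsub]
  have h2 := Set.ncard_union_le (f '' (e '' S')) (f '' (e '' S \ e '' S'))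
  rw [← h1] at h2
  have h3 := Set.ncard_image_le (f := f) (hf.subset (Set.sdiff_subset (t := e '' S')))
  have h4 := Set.ncard_sdiff_add_ncard_of_subset hsub hf
  omega

theorem cnt_ineq (S S' U U' : Set M) (h1 : S' ⊆ S) (h2 : S ⊆ U) (h3 : U ⊆ U')
    (hf : ((fun P => connectedComponentIn U P) '' S).Finite) :
    cnt S U' + cnt S' U ≤ cnt S U + cnt S' U' := by
  apply count_lemma _ _ _ _ h1 hf
  intro P hP Q hQ h
  have hQ' : Q ∈ connectedComponentIn U P := by
    rw [h]; exact mem_connectedComponentIn (h2 hQ)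
  exact connectedComponentIn_eq (connectedComponentIn_mono P h3 hQ')

theorem finite_comp [CompactSpace M] [LocallyConnectedSpace M] {β : M → ℝ} (hβ : Continuous β)
    {x y : ℝ} (hxy : x < y) {S : Set M} (hS : S ⊆ {Q | β Q ≤ x}) :
    ((fun P => connectedComponentIn {Q | β Q ≤ y} P) '' S).Finite := by
  have hK : IsCompact {Q | β Q ≤ x} := (isClosed_le hβ continuous_const).isCompact
  have ho : IsOpen {Q | β Q < y} := isOpen_lt hβ continuous_const
  obtain ⟨t, ht1, ht2⟩ := hK.elim_nhds_subcover (fun P => connectedComponentIn {Q | β Q < y} P)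
    (fun P hP => ho.connectedComponentIn.mem_nhds
      (mem_connectedComponentIn (lt_of_le_of_lt hP hxy)))
  refine (t.finite_toSet.image (fun P => connectedComponentIn {Q | β Q ≤ y} P)).subset ?_
  rintro _ ⟨Q, hQ, rfl⟩
  have := ht2 (hS hQ)
  simp only [Set.mem_iUnion] at this
  obtain ⟨P, hP, hPQ⟩ := this
  refine ⟨P, hP, ?_⟩
  refine connectedComponentIn_eq (connectedComponentIn_mono P (fun z hz => ?_) hPQ)
  exact le_of_lt (show β z < y from hz)

open scoped Classical in
noncomputable def cc (α : M → ℝ) (x : ℝ) : ℤ := if ∃ P, α P ≤ x then 1 else 0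

noncomputable def RR (α β : M → ℝ) (x y : ℝ) : ℤ :=
  (cnt {Q | α Q ≤ x} {Q | β Q ≤ y} : ℤ) - cc α x

theorem cnt_univ [ConnectedSpace M] (α : M → ℝ) (x : ℝ) :
    (cnt {Q | α Q ≤ x} Set.univ : ℤ) = cc α x := by
  unfold cnt cc
  split_ifs with h
  · have : (fun P : M => connectedComponentIn Set.univ P) '' {Q | α Q ≤ x} = {Set.univ} := by
      rw [show (fun P : M => connectedComponentIn Set.univ P) = fun _ => Set.univ from by
        funext P
        rw [connectedComponentIn_univ, PreconnectedSpace.connectedComponent_eq_univ]]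
      exact Set.Nonempty.image_const h _
    rw [this]; simp
  · have : {Q | α Q ≤ x} = ∅ := by
      ext Q; simp only [Set.mem_ofPred_eq, Set.mem_empty_iff_false, iff_false]
      exact fun hQ => h ⟨Q, hQ⟩
    rw [this]; simp

variable [CompactSpace M] [ConnectedSpace M] [LocallyConnectedSpace M]

theorem exists_bound {α : M → ℝ} (hα : Continuous α) : ∃ K, ∀ P, |α P| < K := by
  obtain ⟨K, hK⟩ := (isCompact_range hα).isBounded.exists_norm_le
  exact ⟨K + 1, fun P => by have := hK _ ⟨P, rfl⟩; rw [Real.norm_eq_abs] at this; linarith⟩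

theorem good_RR {α β : M → ℝ} (hα : Continuous α) (hβ : Continuous β) (hle : ∀ P, β P ≤ α P) :
    Good (RR α β) := by
  refine ⟨fun x1 x2 y1 y2 h1 h2 h3 => ?_, ?_⟩
  · have := cnt_ineq {Q | α Q ≤ x2} {Q | α Q ≤ x1} {Q | β Q ≤ y1} {Q | β Q ≤ y2}
      (fun Q (hQ : α Q ≤ x1) => hQ.trans h1)
      (fun Q (hQ : α Q ≤ x2) => ((hle Q).trans hQ).trans h2.le)
      (fun Q (hQ : β Q ≤ y1) => hQ.trans h3)
      (finite_comp hβ h2 fun Q (hQ : α Q ≤ x2) => (hle Q).trans hQ)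
    unfold Box RR
    omega
  · obtain ⟨K, hK⟩ := exists_bound hα
    obtain ⟨K', hK'⟩ := exists_bound hβ
    refine ⟨max K K', fun x y _ h => ?_⟩
    unfold RR
    rcases h with h | h
    · have hn : ¬ ∃ P, α P ≤ x := by
        rintro ⟨P, hP⟩
        have := (abs_lt.1 (hK P)).1
        linarith [le_max_left K K']
      have : {Q | α Q ≤ x} = ∅ := by
        ext Q; simp only [Set.mem_ofPred_eq, Set.mem_empty_iff_false, iff_false]
        exact fun hQ => hn ⟨Q, hQ⟩
      rw [this]
      simp [cnt, cc, hn]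
    · have : {Q | β Q ≤ y} = Set.univ := by
        ext Q; simp only [Set.mem_ofPred_eq, Set.mem_univ, iff_true]
        have := (abs_lt.1 (hK' Q)).2
        linarith [le_max_right K K']
      rw [this, cnt_univ, sub_self]

theorem dom1 {α β : M → ℝ} {e : ℝ} (hα : Continuous α) (hβ : Continuous β)
    (hle : ∀ P, β P ≤ α P) (hle2 : ∀ P, α P ≤ β P + e) : Dom (RR α β) (RR α α) e := by
  refine ⟨fun x1 x2 t h1 h2 => ?_, fun x1 x2 t h1 h2 => ?_⟩
  · have := cnt_ineq {Q | α Q ≤ x2} {Q | α Q ≤ x1} {Q | α Q ≤ t} {Q | β Q ≤ t}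
      (fun Q (hQ : α Q ≤ x1) => hQ.trans h1)
      (fun Q (hQ : α Q ≤ x2) => hQ.trans h2.le)
      (fun Q (hQ : α Q ≤ t) => (hle Q).trans hQ)
      (finite_comp hα h2 fun Q (hQ : α Q ≤ x2) => hQ)
    unfold RR
    omega
  · have := cnt_ineq {Q | α Q ≤ x2} {Q | α Q ≤ x1} {Q | β Q ≤ t - e} {Q | α Q ≤ t}
      (fun Q (hQ : α Q ≤ x1) => hQ.trans h1)
      (fun Q (hQ : α Q ≤ x2) => show β Q ≤ t - e by linarith [hle Q])
      (fun Q (hQ : β Q ≤ t - e) => show α Q ≤ t by linarith [hle2 Q])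
      (finite_comp hβ (show x2 < t - e by linarith) fun Q (hQ : α Q ≤ x2) => (hle Q).trans hQ)
    unfold RR
    omega

theorem dom2 {α β : M → ℝ} {e : ℝ} (he : 0 ≤ e) (hβ : Continuous β)
    (hle : ∀ P, β P ≤ α P) (hle2 : ∀ P, α P ≤ β P + e) :
    Dom (dual (RR α β)) (dual (RR β β)) e := by
  refine ⟨fun x1 x2 t h1 h2 => ?_, fun x1 x2 t h1 h2 => ?_⟩
  · have := cnt_ineq {Q | β Q ≤ -t} {Q | α Q ≤ -t} {Q | β Q ≤ -x2} {Q | β Q ≤ -x1}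
      (fun Q (hQ : α Q ≤ -t) => (hle Q).trans hQ)
      (fun Q (hQ : β Q ≤ -t) => show β Q ≤ -x2 by linarith)
      (fun Q (hQ : β Q ≤ -x2) => show β Q ≤ -x1 by linarith)
      (finite_comp hβ (show -t < -x2 by linarith) fun Q (hQ : β Q ≤ -t) => hQ)
    unfold dual RR
    omega
  · have := cnt_ineq {Q | α Q ≤ -(t - e)} {Q | β Q ≤ -t} {Q | β Q ≤ -x2} {Q | β Q ≤ -x1}
      (fun Q (hQ : β Q ≤ -t) => show α Q ≤ -(t - e) by linarith [hle2 Q])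
      (fun Q (hQ : α Q ≤ -(t - e)) => show β Q ≤ -x2 by linarith [hle Q])
      (fun Q (hQ : β Q ≤ -x2) => show β Q ≤ -x1 by linarith)
      (finite_comp hβ (show -(t - e) < -x2 by linarith)
        fun Q (hQ : α Q ≤ -(t - e)) => (hle Q).trans hQ)
    unfold dual RR
    omega

theorem mu_RR (φ : M → ℝ) (x y : ℝ) : mu (RR φ φ) x y = mult φ (x, y) := by
  unfold mu mult
  congr 1
  ext z
  simp only [Set.mem_ofPred_eq]
  refine exists_congr fun η => and_congr_right fun _ => and_congr_right fun _ => ?_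
  unfold Box RR
  simp only [rsf_eq]
  constructor <;> intro h <;> omega

theorem mult_shift (ψ : M → ℝ) (ε x y : ℝ) :
    mult (fun P => ψ P - ε) (x, y) = mult ψ (x + ε, y + ε) := by
  have : ∀ a b, rsf (fun P => ψ P - ε) a b = rsf ψ (a + ε) (b + ε) := by
    intro a b; unfold rsf; simp only [sub_le_iff_le_add]
  unfold mult
  congr 1
  ext z
  simp only [Set.mem_ofPred_eq, this]
  refine exists_congr fun η => and_congr_right fun _ => and_congr ?_ ?_
  · constructor <;> intro h <;> linarith
  · rw [show x + η + ε = x + ε + η by ring, show x - η + ε = x + ε - η by ring,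
      show y + η + ε = y + ε + η by ring, show y - η + ε = y + ε - η by ring]

theorem multInf_pos {φ : M → ℝ} (hφ : Continuous φ) {P : M} (hP : ∀ Q, φ P ≤ φ Q) :
    0 < multInf φ (φ P) := by
  have key : ∀ z ∈ {z : ℤ | ∃ ε : ℝ, 0 < ε ∧ φ P + ε < 1 / ε ∧
    z = (rsf φ (φ P + ε) (1 / ε) : ℤ) - (rsf φ (φ P - ε) (1 / ε) : ℤ)}, 1 ≤ z := by
    rintro z ⟨ε, h1, h2, rfl⟩
    have e0 : {Q | φ Q ≤ φ P - ε} = ∅ := by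
      ext Q; simp only [Set.mem_ofPred_eq, Set.mem_empty_iff_false, iff_false]
      intro hQ; linarith [hP Q]
    have hpos : 0 < cnt {Q | φ Q ≤ φ P + ε} {Q | φ Q ≤ 1 / ε} :=
      (Set.ncard_pos (finite_comp hφ h2 fun Q hQ => hQ)).2
        ⟨_, P, show φ P ≤ φ P + ε by linarith, rfl⟩
    rw [rsf_eq, rsf_eq, e0]
    have : cnt (∅ : Set M) {Q | φ Q ≤ 1 / ε} = 0 := by simp [cnt]
    omega
  unfold multInf
  have hne : {z : ℤ | ∃ ε : ℝ, 0 < ε ∧ φ P + ε < 1 / ε ∧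
    z = (rsf φ (φ P + ε) (1 / ε) : ℤ) - (rsf φ (φ P - ε) (1 / ε) : ℤ)}.Nonempty := by
    have hp : 0 < 1 / (|φ P| + 2) := by positivity
    refine ⟨_, 1 / (|φ P| + 2), hp, ?_, rfl⟩
    rw [one_div_one_div]
    have : 1 / (|φ P| + 2) ≤ 1 := by
      rw [div_le_one (by positivity)]; linarith [abs_nonneg (φ P)]
    linarith [le_abs_self (φ P)]
  have := key _ (Int.csInf_mem hne ⟨1, key⟩)
  omega

end topo
end MS

theorem matching_stability
    {M : Type*} [TopologicalSpace M] [CompactSpace M] [ConnectedSpace M] [LocallyConnectedSpace M] [T2Space M] {φ ψ : M → ℝ} (hφ : Continuous φ) (hψ : Continuous ψ)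
    (ε : ℝ) (hε : 0 ≤ ε) (hb : ∀ Q : M, |φ Q - ψ Q| ≤ ε) :
    dMatch φ ψ ≤ ENNReal.ofReal ε := by
  obtain ⟨P, -, hP⟩ := isCompact_univ.exists_isMinOn Set.univ_nonempty hφ.continuousOn
  obtain ⟨P', -, hP'⟩ := isCompact_univ.exists_isMinOn Set.univ_nonempty hψ.continuousOn
  have hP : ∀ Q, φ P ≤ φ Q := fun Q => hP (Set.mem_univ Q)
  have hP' : ∀ Q, ψ P' ≤ ψ Q := fun Q => hP' (Set.mem_univ Q)
  let β : M → ℝ := fun Q => ψ Q - ε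
  have hβ : Continuous β := hψ.sub continuous_const
  have l1 : ∀ Q, β Q ≤ φ Q := fun Q => by
    have := (abs_le.1 (hb Q)).1
    simp only [β]; linarith
  have l2 : ∀ Q, φ Q ≤ β Q + 2 * ε := fun Q => by
    have := (abs_le.1 (hb Q)).2
    simp only [β]; linarith
  have gP := MS.good_RR hφ hφ (fun _ => le_rfl)
  have gI := MS.good_RR hφ hβ l1
  have gQ := (MS.good_RR hβ hβ (fun _ => le_rfl)).dual
  have h2ε : 0 ≤ 2 * ε := by linarith
  obtain ⟨u, u1, u2, u3⟩ := (MS.dom1 hφ hβ l1 l2).emb h2ε gI gP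
  obtain ⟨v, v1, v2, v3⟩ := (MS.dom2 h2ε hβ l1 l2).emb h2ε gI.dual gQ
  obtain ⟨E, hE⟩ := MS.dual_equiv gI
  have : Countable (MS.Bars (MS.RR φ φ)) := (MS.bars_countable gP).to_subtype
  have : Countable (MS.Bars (MS.dual (MS.RR β β))) := (MS.bars_countable gQ).to_subtype
  have hmu : ∀ x y, MS.mu (MS.dual (MS.RR β β)) x y = mult ψ (-y + ε, -x + ε) := by
    intro x y
    have := MS.mu_dual (MS.RR β β) (-y) (-x)
    rw [neg_neg, neg_neg] at this
    rw [this, MS.mu_RR, MS.mult_shift]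
  refine MS.assemble φ ψ ε (φ P) (ψ P') hε (MS.multInf_pos hφ hP) (MS.multInf_pos hψ hP') ?_
    (MS.pt (MS.RR φ φ))
    (fun b => (-(MS.pt (MS.dual (MS.RR β β)) b).2 + ε, -(MS.pt (MS.dual (MS.RR β β)) b).1 + ε))
    (MS.pt_lt gP) ?_ ?_ ?_ ?_ ?_ u u1 (fun t => v (E t)) (v1.comp E.injective) ?_ ?_ ?_
  · rw [abs_le]
    have a1 := abs_le.1 (hb P)
    have a2 := abs_le.1 (hb P')
    constructor <;> linarith [hP P', hP' P]
  · intro b; rw [← MS.mu_RR]; exact MS.mu_pos gP b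
  · intro x y hxy; rw [← MS.mu_RR]; exact (MS.pt_fiber gP hxy).2
  · intro b; have := MS.pt_lt gQ b; simp only; linarith
  · intro b; simp only; rw [← hmu]; exact MS.mu_pos gQ b
  · intro x y hxy
    have h := (MS.pt_fiber gQ (x := -(y - ε)) (y := -(x - ε)) (by linarith)).2
    rw [hmu, neg_neg, neg_neg, sub_add_cancel, sub_add_cancel] at h
    rw [← h]
    refine Nat.card_congr (Equiv.subtypeEquivRight fun p => ?_)
    rw [Prod.ext_iff, Prod.ext_iff]
    constructor
    · rintro ⟨h1, h2⟩; constructor <;> simp only at * <;> linarith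
    · rintro ⟨h1, h2⟩; constructor <;> simp only at * <;> linarith
  · intro t
    obtain ⟨a1, a2, a3⟩ := u2 t
    obtain ⟨b1, b2, b3⟩ := v2 (E t)
    obtain ⟨c1, c2⟩ := hE t
    simp only [abs_le]
    refine ⟨⟨?_, ?_⟩, ?_, ?_⟩ <;> linarith
  · intro b hb'
    linarith [u3 b hb']
  · intro b hb'
    have := v3 b (fun ⟨t, ht⟩ => hb' ⟨E.symm t, by simpa using ht⟩)
    simp only
    linarith
end
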